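/- For every real number q > 0, the 3×3 matrices R₁^{[3,1]}(q), R₂^{[3,1]}(q), R₃^{[3,1]}(q) defined in the context satisfy the Yang–Baxter (braid) relations R₁R₂R₁ = R₂R₁R₂ and R₂R₃R₂ = R₃R₂R₃, together with far commutativity R₁R₃ = R₃R₁. -/

import Mathlib

/-!
Each `Rᵢ` has eigenvalues `q`, `q`, `-q⁻¹`, so `Rᵢ = q - Eᵢ` with `Eᵢ` of rank one and
`Eᵢ² = [2]_q Eᵢ`. The braid relation for `q - E` and `q - F` reduces to `EFE - E = FEF - F`, which
holds for neighbouring `Eᵢ` because they satisfy the Temperley–Lieb relation `EFE = E`; for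
rank-one matrices that relation is a statement about the dot products of the vectors spanning them.
-/

/-- `[2]_q = q + q^{−1}`. -/
noncomputable def tw (q : ℝ) : ℝ := q + q⁻¹

/-- `[3]_q = q² + 1 + q^{−2}`. -/
noncomputable def th (q : ℝ) : ℝ := q ^ 2 + 1 + (q⁻¹) ^ 2

/-- `R₁^{[3,1]}(q) = diag(q, q, −q^{−1})`. -/
noncomputable def R1_31 (q : ℝ) : Matrix (Fin 3) (Fin 3) ℝ :=
  !![q, 0, 0; 0, q, 0; 0, 0, -q⁻¹]

/-- `R₂^{[3,1]}(q)`. -/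
noncomputable def R2_31 (q : ℝ) : Matrix (Fin 3) (Fin 3) ℝ :=
  !![q, 0, 0;
     0, -1 / (q ^ 2 * tw q), -Real.sqrt (th q) / tw q;
     0, -Real.sqrt (th q) / tw q, q ^ 2 / tw q]

/-- `R₃^{[3,1]}(q)`. -/
noncomputable def R3_31 (q : ℝ) : Matrix (Fin 3) (Fin 3) ℝ :=
  !![-1 / (q ^ 3 * th q), -(tw q) * Real.sqrt (q ^ 2 + (q⁻¹) ^ 2) / th q, 0;
     -(tw q) * Real.sqrt (q ^ 2 + (q⁻¹) ^ 2) / th q, q ^ 3 / th q, 0;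
     0, 0, q]

section HeckeAlgebra

variable {K A : Type*} [CommRing K] [Ring A] [Algebra K A]

theorem smul_one_sub_mul_smul_one_sub_mul_smul_one_sub {q δ : K} (hδ : q * δ = q ^ 2 + 1) {e : A}
    (he : e * e = δ • e) (f : A) :
    (q • 1 - e) * (q • 1 - f) * (q • 1 - e) =
      q ^ 3 • (1 : A) - q ^ 2 • (e + f) + q • (e * f + f * e) - (e * f * e - e) := by
  have hee : q • (e * e) = q ^ 2 • e + e := by
    rw [he, smul_smul, hδ, add_smul, one_smul]
  calc (q • 1 - e) * (q • 1 - f) * (q • 1 - e)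
      = q ^ 3 • (1 : A) - q ^ 2 • (2 • e + f) + q • (e * e)
          + q • (e * f + f * e) - e * f * e := by
        simp only [sub_mul, mul_sub, smul_mul_assoc, mul_smul_comm, one_mul, mul_one]
        module
    _ = q ^ 3 • (1 : A) - q ^ 2 • (e + f) + q • (e * f + f * e) - (e * f * e - e) := by
        rw [hee]
        module

theorem braid_smul_one_sub {q δ : K} (hδ : q * δ = q ^ 2 + 1) {e f : A}
    (he : e * e = δ • e) (hf : f * f = δ • f) (hef : e * f * e - e = f * e * f - f) :
    (q • 1 - e) * (q • 1 - f) * (q • 1 - e) = (q • 1 - f) * (q • 1 - e) * (q • 1 - f) := by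
  rw [smul_one_sub_mul_smul_one_sub_mul_smul_one_sub hδ he,
    smul_one_sub_mul_smul_one_sub_mul_smul_one_sub hδ hf, hef, add_comm e, add_comm (e * f)]

end HeckeAlgebra

section RankOne

open Matrix

section Semiring

variable {n K : Type*} [Fintype n] [CommSemiring K]

theorem vecMulVec_mul_self (u v : n → K) :
    vecMulVec u v * vecMulVec u v = (v ⬝ᵥ u) • vecMulVec u v := by
  rw [vecMulVec_mul_vecMulVec, vecMulVec_smul]

theorem vecMulVec_mul_vecMulVec_mul_self (u v u' v' : n → K) :
    vecMulVec u v * vecMulVec u' v' * vecMulVec u v =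
      ((v ⬝ᵥ u') * (v' ⬝ᵥ u)) • vecMulVec u v := by
  simp only [vecMulVec_mul_vecMulVec, vecMulVec_smul, smul_mul, smul_smul]

theorem commute_vecMulVec {u v u' v' : n → K} (h : v ⬝ᵥ u' = 0) (h' : v' ⬝ᵥ u = 0) :
    Commute (vecMulVec u v) (vecMulVec u' v') := by
  simp only [Commute, SemiconjBy, vecMulVec_mul_vecMulVec, h, h', zero_smul, vecMulVec_zero]

end Semiring

variable {n K : Type*} [Fintype n] [DecidableEq n] [CommRing K]

/-- The rank-one perturbation `q - u vᵀ` of the scalar `q`. It is the form taken by a Hecke algebra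
generator whose second eigenvalue `q - v ⬝ᵥ u` is simple. -/
def heckeReflection (q : K) (u v : n → K) : Matrix n n K :=
  q • 1 - vecMulVec u v

theorem heckeReflection_braid {q δ : K} (hδ : q * δ = q ^ 2 + 1) {u v u' v' : n → K}
    (huv : v ⬝ᵥ u = δ) (huv' : v' ⬝ᵥ u' = δ) (hcross : (v ⬝ᵥ u') * (v' ⬝ᵥ u) = 1) :
    heckeReflection q u v * heckeReflection q u' v' * heckeReflection q u v =
      heckeReflection q u' v' * heckeReflection q u v * heckeReflection q u' v' := by
  refine braid_smul_one_sub hδ (huv ▸ vecMulVec_mul_self u v) (huv' ▸ vecMulVec_mul_self u' v') ?_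
  rw [vecMulVec_mul_vecMulVec_mul_self, vecMulVec_mul_vecMulVec_mul_self, mul_comm (v' ⬝ᵥ u),
    hcross, one_smul, one_smul, sub_self, sub_self]

theorem commute_heckeReflection (q q' : K) {u v u' v' : n → K} (h : v ⬝ᵥ u' = 0)
    (h' : v' ⬝ᵥ u = 0) : Commute (heckeReflection q u v) (heckeReflection q' u' v') :=
  have scalar_commute (r : K) (M : Matrix n n K) : Commute (r • 1) M :=
    (Commute.one_left M).smul_left r
  (scalar_commute q _).sub_left
    ((scalar_commute q' _).symm.sub_right (commute_vecMulVec h h'))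

end RankOne

section QuantumIntegers

theorem mul_tw {q : ℝ} (hq : q ≠ 0) : q * tw q = q ^ 2 + 1 := by
  rw [tw, mul_add, mul_inv_cancel₀ hq, sq]

theorem tw_ne_zero {q : ℝ} (hq : q ≠ 0) : tw q ≠ 0 := by
  refine right_ne_zero_of_mul (a := q) ?_
  rw [mul_tw hq]
  positivity

theorem th_pos (q : ℝ) : 0 < th q := by
  unfold th
  positivity

theorem th_add_one {q : ℝ} (hq : q ≠ 0) : th q + 1 = tw q ^ 2 := by
  unfold th tw
  field_simp
  ring

theorem mul_self_sqrt_th (q : ℝ) : √(th q) * √(th q) = th q :=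
  Real.mul_self_sqrt (th_pos q).le

theorem mul_self_sqrt_sq_add_inv_sq (q : ℝ) :
    √(q ^ 2 + q⁻¹ ^ 2) * √(q ^ 2 + q⁻¹ ^ 2) = q ^ 2 + q⁻¹ ^ 2 :=
  Real.mul_self_sqrt (by positivity)

end QuantumIntegers

section Block31

open Matrix

/-- The eigenvector of `R1_31 q`, `q ≠ 0`, for the eigenvalue `-q⁻¹`, spanning the range of
`q - R1_31 q`. It is normalized to have last coordinate `1`. -/
def eigenvector1 : Fin 3 → ℝ := ![0, 0, 1]

/-- The eigenvector of `R2_31 q`, `q ≠ 0`, for the eigenvalue `-q⁻¹`, spanning the range of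
`q - R2_31 q`. It is normalized to have last coordinate `1`. -/
noncomputable def eigenvector2 (q : ℝ) : Fin 3 → ℝ := ![0, √(th q), 1]

/-- The eigenvector of `R3_31 q`, `q ≠ 0`, for the eigenvalue `-q⁻¹`, spanning the range of
`q - R3_31 q`. It is normalized to have middle coordinate `1`. -/
noncomputable def eigenvector3 (q : ℝ) : Fin 3 → ℝ := ![√(q ^ 2 + q⁻¹ ^ 2), 1, 0]

theorem eigenvector1_dotProduct_self : eigenvector1 ⬝ᵥ eigenvector1 = 1 := by
  simp [eigenvector1]

theorem eigenvector2_dotProduct_self {q : ℝ} (hq : q ≠ 0) :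
    eigenvector2 q ⬝ᵥ eigenvector2 q = tw q ^ 2 := by
  simp [eigenvector2, mul_self_sqrt_th, th_add_one hq]

theorem eigenvector3_dotProduct_self (q : ℝ) : eigenvector3 q ⬝ᵥ eigenvector3 q = th q := by
  calc eigenvector3 q ⬝ᵥ eigenvector3 q
      = √(q ^ 2 + q⁻¹ ^ 2) * √(q ^ 2 + q⁻¹ ^ 2) + 1 := by simp [eigenvector3]
    _ = th q := by rw [mul_self_sqrt_sq_add_inv_sq, th, add_right_comm]

theorem eigenvector1_dotProduct_eigenvector2 (q : ℝ) : eigenvector1 ⬝ᵥ eigenvector2 q = 1 := by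
  simp [eigenvector1, eigenvector2]

theorem eigenvector2_dotProduct_eigenvector3 (q : ℝ) :
    eigenvector2 q ⬝ᵥ eigenvector3 q = √(th q) := by
  simp [eigenvector2, eigenvector3]

theorem eigenvector1_dotProduct_eigenvector3 (q : ℝ) : eigenvector1 ⬝ᵥ eigenvector3 q = 0 := by
  simp [eigenvector1, eigenvector3]

theorem R1_31_eq_heckeReflection (q : ℝ) :
    R1_31 q = heckeReflection q (tw q • eigenvector1) eigenvector1 := by
  ext i j
  fin_cases i <;> fin_cases j <;> simp [R1_31, heckeReflection, eigenvector1, tw]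

theorem R2_31_eq_heckeReflection {q : ℝ} (hq : q ≠ 0) :
    R2_31 q = heckeReflection q ((tw q)⁻¹ • eigenvector2 q) (eigenvector2 q) := by
  have htw : tw q ≠ 0 := tw_ne_zero hq
  have entry11 : -1 / (q ^ 2 * tw q) = q - (tw q)⁻¹ * th q := by
    field_simp
    rw [mul_tw hq, th]
    field_simp
    ring
  have entry22 : q ^ 2 / tw q = q - (tw q)⁻¹ := by
    field_simp
    rw [mul_tw hq]
    ring
  ext i j
  fin_cases i <;> fin_cases j <;>
    simp [R2_31, heckeReflection, eigenvector2, mul_assoc, entry11, entry22,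
      mul_self_sqrt_th, div_eq_inv_mul]

theorem R3_31_eq_heckeReflection {q : ℝ} (hq : q ≠ 0) :
    R3_31 q = heckeReflection q ((tw q / th q) • eigenvector3 q) (eigenvector3 q) := by
  have hth : th q ≠ 0 := (th_pos q).ne'
  have entry00 : -1 / (q ^ 3 * th q) = q - tw q / th q * (q ^ 2 + q⁻¹ ^ 2) := by
    field_simp
    unfold tw th
    field_simp
    ring
  have entry11 : q ^ 3 / th q = q - tw q / th q := by
    field_simp
    unfold tw th
    field_simp
    ring
  ext i j
  fin_cases i <;> fin_cases j <;>
    simp [-inv_pow, R3_31, heckeReflection, eigenvector3, mul_assoc, entry00, entry11,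
      mul_self_sqrt_sq_add_inv_sq, neg_div, mul_div_right_comm]

theorem R1_31_mul_R2_31_mul_R1_31 {q : ℝ} (hq : q ≠ 0) :
    R1_31 q * R2_31 q * R1_31 q = R2_31 q * R1_31 q * R2_31 q := by
  have htw : tw q ≠ 0 := tw_ne_zero hq
  rw [R1_31_eq_heckeReflection, R2_31_eq_heckeReflection hq]
  apply heckeReflection_braid (mul_tw hq)
  · rw [dotProduct_smul, eigenvector1_dotProduct_self, smul_eq_mul, mul_one]
  · rw [dotProduct_smul, eigenvector2_dotProduct_self hq, smul_eq_mul, sq, inv_mul_cancel_left₀ htw]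
  · rw [dotProduct_smul, dotProduct_smul, dotProduct_comm (eigenvector2 q),
      eigenvector1_dotProduct_eigenvector2, smul_eq_mul, smul_eq_mul, mul_one, mul_one,
      inv_mul_cancel₀ htw]

theorem R2_31_mul_R3_31_mul_R2_31 {q : ℝ} (hq : q ≠ 0) :
    R2_31 q * R3_31 q * R2_31 q = R3_31 q * R2_31 q * R3_31 q := by
  have htw : tw q ≠ 0 := tw_ne_zero hq
  have hth : th q ≠ 0 := (th_pos q).ne'
  rw [R2_31_eq_heckeReflection hq, R3_31_eq_heckeReflection hq]
  apply heckeReflection_braid (mul_tw hq)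
  · rw [dotProduct_smul, eigenvector2_dotProduct_self hq, smul_eq_mul, sq, inv_mul_cancel_left₀ htw]
  · rw [dotProduct_smul, eigenvector3_dotProduct_self, smul_eq_mul, div_mul_cancel₀ _ hth]
  · rw [dotProduct_smul, dotProduct_smul, dotProduct_comm (eigenvector3 q),
      eigenvector2_dotProduct_eigenvector3, smul_eq_mul, smul_eq_mul]
    calc tw q / th q * √(th q) * ((tw q)⁻¹ * √(th q))
        = tw q * (tw q)⁻¹ * (√(th q) * √(th q) / th q) := by ring
      _ = 1 := by rw [mul_inv_cancel₀ htw, mul_self_sqrt_th, div_self hth, one_mul]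

theorem commute_R1_31_R3_31 {q : ℝ} (hq : q ≠ 0) : Commute (R1_31 q) (R3_31 q) := by
  rw [R1_31_eq_heckeReflection, R3_31_eq_heckeReflection hq]
  apply commute_heckeReflection
  · rw [dotProduct_smul, eigenvector1_dotProduct_eigenvector3, smul_zero]
  · rw [dotProduct_smul, dotProduct_comm, eigenvector1_dotProduct_eigenvector3, smul_zero]

end Block31

theorem stmt12_general (q : ℝ) (hq : q ≠ 0) :
    R1_31 q * R2_31 q * R1_31 q = R2_31 q * R1_31 q * R2_31 q ∧
    R2_31 q * R3_31 q * R2_31 q = R3_31 q * R2_31 q * R3_31 q ∧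
    R1_31 q * R3_31 q = R3_31 q * R1_31 q :=
  ⟨R1_31_mul_R2_31_mul_R1_31 hq, R2_31_mul_R3_31_mul_R2_31 hq, commute_R1_31_R3_31 hq⟩

/-- The `[3,1]`-blocks of the fundamental Reshetikhin–Turaev representation of `B₄`
satisfy the Yang–Baxter (braid) relations and far commutativity. -/
theorem stmt12 (q : ℝ) (hq : 0 < q) :
    R1_31 q * R2_31 q * R1_31 q = R2_31 q * R1_31 q * R2_31 q ∧
    R2_31 q * R3_31 q * R2_31 q = R3_31 q * R2_31 q * R3_31 q ∧
    R1_31 q * R3_31 q = R3_31 q * R1_31 q :=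
  stmt12_general q hq.ne'
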